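/- arXiv:2401.08215 — 2 statements merged into one kernel-verified Lean document; each statement's English description precedes it below -/
import Mathlib

section
/- Let W be a group generated by a finite set S, and let (V, ρ) be an n-dimensional irreducible reflection representation of (W, S) over a field of characteristic 0. Then for every 0 ≤ d ≤ n, the d-th exterior power Λ^d V is an irreducible W-module. -/
open ExteriorAlgebra Module

section Preamble

/-- A linear endomorphism is diagonalizable if its eigenspaces span the whole space. -/
def IsDiagonalizable {F V : Type*} [Field F] [AddCommGroup V] [Module F V]
    (s : Module.End F V) : Prop :=
  (⨆ μ : F, Module.End.eigenspace s μ) = ⊤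

/-- A generalized reflection: a diagonalizable endomorphism with `rank (s - id) = 1`. -/
def IsGenReflection {F V : Type*} [Field F] [AddCommGroup V] [Module F V]
    (s : Module.End F V) : Prop :=
  IsDiagonalizable s ∧ Module.finrank F (LinearMap.range (s - 1)) = 1

/-- A reflection vector of `s`: a nonzero vector in the image of `s - id`. -/
def IsReflVector {F V : Type*} [Field F] [AddCommGroup V] [Module F V]
    (s : Module.End F V) (a : V) : Prop :=
  a ≠ 0 ∧ a ∈ LinearMap.range (s - 1)

lemma map_mem_exteriorPower {R M N : Type*} [CommRing R] [AddCommGroup M] [Module R M]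
    [AddCommGroup N] [Module R N] (d : ℕ) (f : M →ₗ[R] N) {x : ExteriorAlgebra R M}
    (hx : x ∈ ⋀[R]^d M) : ExteriorAlgebra.map f x ∈ ⋀[R]^d N := by
  rw [← ιMulti_span_fixedDegree] at hx ⊢
  induction hx using Submodule.span_induction with
  | mem x hx =>
      obtain ⟨m, rfl⟩ := hx
      rw [map_apply_ιMulti]
      exact Submodule.subset_span ⟨_, rfl⟩
  | zero => simp
  | add x y _ _ hx hy => rw [map_add]; exact Submodule.add_mem _ hx hy
  | smul c x _ hx => rw [map_smul]; exact Submodule.smul_mem _ _ hx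

/-- The linear map induced on `d`-th exterior powers by a linear map. -/
def extMap {R M N : Type*} [CommRing R] [AddCommGroup M] [Module R M]
    [AddCommGroup N] [Module R N] (d : ℕ) (f : M →ₗ[R] N) :
    ⋀[R]^d M →ₗ[R] ⋀[R]^d N :=
  ((ExteriorAlgebra.map f).toLinearMap.domRestrict (⋀[R]^d M)).codRestrict (⋀[R]^d N)
    (fun x => map_mem_exteriorPower d f x.2)

/-- The wedge `v 0 ∧ ⋯ ∧ v (d-1)` as an element of the `d`-th exterior power. -/
def wedge {R M : Type*} [CommRing R] [AddCommGroup M] [Module R M] (d : ℕ)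
    (v : Fin d → M) : ⋀[R]^d M :=
  ⟨ιMulti R d v, ιMulti_range R d (Set.mem_range_self v)⟩

end Preamble

namespace ExteriorAlgebra

variable {F V : Type*} [Field F] [AddCommGroup V] [Module F V]

/-- The derivation of the exterior algebra extending the rank one endomorphism
`v ↦ f v • a`. -/
noncomputable def rankOneDerivation (a : V) (f : Dual F V) :
    ExteriorAlgebra F V →ₗ[F] ExteriorAlgebra F V :=
  LinearMap.mulLeft F (ι F a) ∘ₗ CliffordAlgebra.contractLeft (Q := (0 : QuadraticForm F V)) f

/-- Contraction of the exterior algebra by a linear form. -/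
noncomputable def contract (f : Dual F V) : ExteriorAlgebra F V →ₗ[F] ExteriorAlgebra F V :=
  CliffordAlgebra.contractLeft (Q := (0 : QuadraticForm F V)) f

lemma rankOneDerivation_apply (a : V) (f : Dual F V) (x : ExteriorAlgebra F V) :
    rankOneDerivation a f x = ι F a * contract f x := rfl

lemma contract_ι_mul (f : Dual F V) (a : V) (x : ExteriorAlgebra F V) :
    contract f (ι F a * x) = f a • x - ι F a * contract f x :=
  CliffordAlgebra.contractLeft_ι_mul _ a x

lemma contract_algebraMap (f : Dual F V) (r : F) :
    contract f (algebraMap F (ExteriorAlgebra F V) r) = 0 :=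
  CliffordAlgebra.contractLeft_algebraMap _ _ r

lemma contract_contract_comm (f g : Dual F V) (x : ExteriorAlgebra F V) :
    contract f (contract g x) = -contract g (contract f x) :=
  CliffordAlgebra.contractLeft_comm _ _ _

lemma contract_add (f g : Dual F V) (x : ExteriorAlgebra F V) :
    contract (f + g) x = contract f x + contract g x := by
  simp [contract]

lemma contract_smul (r : F) (f : Dual F V) (x : ExteriorAlgebra F V) :
    contract (r • f) x = r • contract f x := by
  simp [contract]

lemma ι_mul_ι_mul_comm (a b : V) (x : ExteriorAlgebra F V) :
    ι F a * (ι F b * x) = -(ι F b * (ι F a * x)) := by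
  rw [← mul_assoc, ← mul_assoc, eq_neg_iff_add_eq_zero, ← add_mul, ι_add_mul_swap, zero_mul]

lemma ι_mul_ι_mul_self (a : V) (x : ExteriorAlgebra F V) : ι F a * (ι F a * x) = 0 := by
  rw [← mul_assoc, ι_sq_zero, zero_mul]

lemma rankOneDerivation_commutator (a b : V) (f g : Dual F V) (x : ExteriorAlgebra F V) :
    rankOneDerivation a f (rankOneDerivation b g x) -
        rankOneDerivation b g (rankOneDerivation a f x) =
      f b • rankOneDerivation a g x - g a • rankOneDerivation b f x := by
  simp only [rankOneDerivation_apply, contract_ι_mul, mul_sub, mul_smul_comm]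
  rw [contract_contract_comm f g, ι_mul_ι_mul_comm a b]
  simp only [mul_neg, neg_neg]
  abel

lemma left_induction {p : ExteriorAlgebra F V → Prop}
    (algebraMap : ∀ r, p (algebraMap F _ r)) (add : ∀ x y, p x → p y → p (x + y))
    (ι_mul : ∀ a x, p x → p (ι F a * x)) (x : ExteriorAlgebra F V) : p x :=
  CliffordAlgebra.left_induction (Q := (0 : QuadraticForm F V)) algebraMap add
    (fun x m h => ι_mul m x h) x

/-- The functorial action of a transvection or reflection on the exterior algebra. -/
lemma map_eq_add_rankOneDerivation {s : V →ₗ[F] V} {a : V} {f : Dual F V}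
    (hs : ∀ v, s v = v + f v • a) (x : ExteriorAlgebra F V) :
    map s x = x + rankOneDerivation a f x := by
  induction x using left_induction with
  | algebraMap r => simp [rankOneDerivation_apply, contract_algebraMap]
  | add x y hx hy => rw [map_add, hx, hy, map_add]; abel
  | ι_mul v x hx =>
    rw [map_mul, hx, map_apply_ι, hs]
    simp only [rankOneDerivation_apply, contract_ι_mul, map_add, map_smul, add_mul, mul_add,
      mul_sub, smul_mul_assoc, mul_smul_comm, ι_mul_ι_mul_self, smul_zero]
    rw [ι_mul_ι_mul_comm v a]
    abel

lemma ι_mul_mem_exteriorPower {d : ℕ} (a : V) {x : ExteriorAlgebra F V} (hx : x ∈ ⋀[F]^d V) :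
    ι F a * x ∈ ⋀[F]^(d + 1) V := by
  rw [exteriorPower, pow_succ']
  exact Submodule.mul_mem_mul ⟨a, rfl⟩ hx

/-- Graded induction: every element of `⋀^(d+1)` is a sum of products `ι a * x` with
`x ∈ ⋀^d`. -/
lemma exteriorPower_succ_induction {d : ℕ}
    {p : ∀ x : ExteriorAlgebra F V, x ∈ ⋀[F]^(d + 1) V → Prop}
    (add : ∀ x hx y hy, p x hx → p y hy → p (x + y) (add_mem hx hy))
    (ι_mul : ∀ a x, ∀ hx : x ∈ ⋀[F]^d V, p (ι F a * x) (ι_mul_mem_exteriorPower a hx))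
    {x : ExteriorAlgebra F V} (hx : x ∈ ⋀[F]^(d + 1) V) : p x hx := by
  have h : x ∈ LinearMap.range (ι F) * ⋀[F]^d V := by rwa [← pow_succ']
  refine Submodule.mul_induction_on' (C := fun x hx => p x (by rwa [exteriorPower, pow_succ']))
    ?_ (fun x hx y hy => add x _ y _) h
  rintro _ ⟨a, rfl⟩ x hx
  exact ι_mul a x hx

lemma mem_exteriorPower_zero {x : ExteriorAlgebra F V} :
    x ∈ ⋀[F]^0 V ↔ ∃ r, algebraMap F _ r = x := by
  rw [exteriorPower, pow_zero, Submodule.mem_one]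

lemma contract_mem_exteriorPower (f : Dual F V) {d : ℕ} {x : ExteriorAlgebra F V}
    (hx : x ∈ ⋀[F]^(d + 1) V) : contract f x ∈ ⋀[F]^d V := by
  induction d generalizing x with
  | zero =>
    induction hx using exteriorPower_succ_induction with
    | add x _ y _ hx hy => rw [map_add]; exact add_mem hx hy
    | ι_mul a x hx =>
      obtain ⟨r, rfl⟩ := mem_exteriorPower_zero.1 hx
      rw [contract_ι_mul, contract_algebraMap, mul_zero, sub_zero]
      exact Submodule.smul_mem _ _ hx
  | succ d ih =>
    induction hx using exteriorPower_succ_induction with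
    | add x _ y _ hx hy => rw [map_add]; exact add_mem hx hy
    | ι_mul a x hx =>
      rw [contract_ι_mul]
      exact sub_mem (Submodule.smul_mem _ _ hx) (ι_mul_mem_exteriorPower a (ih hx))

/-- Euler's formula: the derivation extending the identity is multiplication by the degree. -/
lemma sum_rankOneDerivation_basis {κ : Type*} [Fintype κ] (b : Basis κ F V) {d : ℕ}
    {x : ExteriorAlgebra F V} (hx : x ∈ ⋀[F]^d V) :
    ∑ i, rankOneDerivation (b i) (b.coord i) x = (d : F) • x := by
  induction d generalizing x with
  | zero =>
    obtain ⟨r, rfl⟩ := mem_exteriorPower_zero.1 hx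
    simp [rankOneDerivation_apply, contract_algebraMap]
  | succ d ih =>
    induction hx using exteriorPower_succ_induction with
    | add x _ y _ hx hy => simp only [map_add, Finset.sum_add_distrib, hx, hy, smul_add]
    | ι_mul a x hx =>
      have h := ih hx
      simp only [rankOneDerivation_apply] at h
      simp only [rankOneDerivation_apply, contract_ι_mul, mul_sub, mul_smul_comm,
        ι_mul_ι_mul_comm _ a, sub_neg_eq_add, Finset.sum_add_distrib, ← Finset.mul_sum, h]
      have h' : ∑ i, b.coord i a • (ι F (b i) * x) = ι F a * x := by
        conv_rhs => rw [← b.sum_repr a, map_sum, Finset.sum_mul]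
        simp
      rw [h']
      push_cast
      rw [add_smul, one_smul, add_comm]

lemma exists_contract_ne_zero [CharZero F] [FiniteDimensional F V] {d : ℕ}
    {x : ExteriorAlgebra F V} (hx : x ∈ ⋀[F]^(d + 1) V) (hx0 : x ≠ 0) :
    ∃ f : Dual F V, contract f x ≠ 0 := by
  by_contra! h
  have := sum_rankOneDerivation_basis (Module.finBasis F V) hx
  simp only [rankOneDerivation_apply, h, mul_zero, Finset.sum_const_zero] at this
  exact smul_ne_zero (Nat.cast_ne_zero.2 d.succ_ne_zero) hx0 this.symm

lemma rankOneDerivation_mul (a : V) (f : Dual F V) (y : ExteriorAlgebra F V) {m : ℕ}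
    {z : ExteriorAlgebra F V} (hz : z ∈ ⋀[F]^m V) :
    ∃ w ∈ ⋀[F]^m V, rankOneDerivation a f (z * y) =
      w * y + (-1 : F) ^ m • (ι F a * z * contract f y) := by
  induction m generalizing z a with
  | zero =>
    obtain ⟨r, rfl⟩ := mem_exteriorPower_zero.1 hz
    refine ⟨0, zero_mem _, ?_⟩
    simp [rankOneDerivation_apply, Algebra.algebraMap_eq_smul_one]
  | succ m ih =>
    induction hz using exteriorPower_succ_induction with
    | add z _ z' _ hz hz' =>
      obtain ⟨w, hw, h⟩ := hz
      obtain ⟨w', hw', h'⟩ := hz'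
      refine ⟨w + w', add_mem hw hw', ?_⟩
      rw [add_mul, map_add, h, h']
      simp only [mul_add, add_mul, smul_add]
      abel
    | ι_mul b z hz =>
      obtain ⟨w, hw, h⟩ := ih b hz
      refine ⟨f b • (ι F a * z) - ι F a * w, sub_mem (Submodule.smul_mem _ _
        (ι_mul_mem_exteriorPower a hz)) (ι_mul_mem_exteriorPower a hw), ?_⟩
      rw [rankOneDerivation_apply] at h
      rw [rankOneDerivation_apply, mul_assoc, contract_ι_mul, h]
      simp only [mul_sub, mul_add, sub_mul, mul_smul_comm, smul_mul_assoc, pow_succ, mul_assoc,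
        mul_neg, mul_one, neg_smul]
      abel

/-- If `U` is stable under all rank one derivations and contains `⋀^m * y` for a nonzero
`y ∈ ⋀^d`, then `U` contains `⋀^(m+d)`. -/
lemma exteriorPower_le_of_mul_mem [CharZero F] [FiniteDimensional F V]
    {U : Submodule F (ExteriorAlgebra F V)}
    (hU : ∀ (a : V) (f : Dual F V), ∀ x ∈ U, rankOneDerivation a f x ∈ U)
    {d m : ℕ} {y : ExteriorAlgebra F V} (hy : y ∈ ⋀[F]^d V) (hy0 : y ≠ 0)
    (h : ∀ z ∈ ⋀[F]^m V, z * y ∈ U) : ⋀[F]^(m + d) V ≤ U := by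
  induction d generalizing m y with
  | zero =>
    obtain ⟨r, rfl⟩ := mem_exteriorPower_zero.1 hy
    have hr : r ≠ 0 := by rintro rfl; simp at hy0
    intro z hz
    have := h z hz
    rw [← Algebra.commutes, ← Algebra.smul_def] at this
    exact (Submodule.smul_mem_iff _ hr).1 this
  | succ d ih =>
    obtain ⟨f, hf⟩ := exists_contract_ne_zero hy hy0
    rw [← Nat.add_assoc, Nat.add_right_comm]
    refine ih (contract_mem_exteriorPower f hy) hf fun z hz => ?_
    induction hz using exteriorPower_succ_induction with
    | add z _ z' _ hz hz' => rw [add_mul]; exact add_mem hz hz'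
    | ι_mul a z hz =>
      obtain ⟨w, hw, hwz⟩ := rankOneDerivation_mul a f y hz
      have h1 := hU a f _ (h z hz)
      rw [hwz] at h1
      have h2 := (Submodule.add_mem_iff_right _ (h w hw)).1 h1
      exact (Submodule.smul_mem_iff _ (pow_ne_zero _ (neg_ne_zero.2 one_ne_zero))).1 h2

/-- The stabilizer of a subspace is closed under products of rank one endomorphisms with a
non-nilpotent one. -/
lemma rankOneDerivation_mem_of_commutators [CharZero F] {U : Submodule F (ExteriorAlgebra F V)}
    {a b : V} {f g : Dual F V} (hfa : f a ≠ 0)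
    (haf : ∀ x ∈ U, rankOneDerivation a f x ∈ U) (hbg : ∀ x ∈ U, rankOneDerivation b g x ∈ U)
    {x : ExteriorAlgebra F V} (hx : x ∈ U) :
    f b • rankOneDerivation a g x ∈ U ∧ g a • rankOneDerivation b f x ∈ U := by
  have hZ : ∀ x ∈ U, f b • rankOneDerivation a g x - g a • rankOneDerivation b f x ∈ U := by
    intro x hx
    rw [← rankOneDerivation_commutator]
    exact sub_mem (haf _ (hbg _ hx)) (hbg _ (haf _ hx))
  have hZZ := sub_mem (haf _ (hZ x hx)) (hZ _ (haf x hx))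
  have hc1 := rankOneDerivation_commutator a a f g x
  have hc2 := rankOneDerivation_commutator a b f f x
  have key : rankOneDerivation a f (f b • rankOneDerivation a g x
        - g a • rankOneDerivation b f x) - (f b • rankOneDerivation a g (rankOneDerivation a f x)
        - g a • rankOneDerivation b f (rankOneDerivation a f x)) =
      f a • (f b • rankOneDerivation a g x + g a • rankOneDerivation b f x)
        - (2 * f b * g a) • rankOneDerivation a f x := by
    rw [map_sub, map_smul, map_smul]
    rw [sub_eq_iff_eq_add] at hc1 hc2
    rw [hc1, hc2]
    module
  rw [key] at hZZ
  have hS := (Submodule.smul_mem_iff _ hfa).1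
    ((Submodule.sub_mem_iff_left _ (Submodule.smul_mem _ _ (haf x hx))).1 hZZ)
  have hD := hZ x hx
  have h2 : (2 : F) ≠ 0 := two_ne_zero
  constructor
  · refine (Submodule.smul_mem_iff _ h2).1 ?_
    convert add_mem hS hD using 1
    module
  · refine (Submodule.smul_mem_iff _ h2).1 ?_
    convert sub_mem hS hD using 1
    module

/-- If non-nilpotent rank one endomorphisms `v ↦ f i v • a i` act irreducibly, a subspace of the
exterior algebra stable under their derivations is stable under all rank one derivations. -/
lemma rankOneDerivation_mem_of_irreducible [CharZero F] [FiniteDimensional F V]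
    {κ : Type*} [Nonempty κ] {a : κ → V} {f : κ → Dual F V} (hfa : ∀ i, f i (a i) ≠ 0)
    (hirr : ∀ N : Submodule F V, (∀ i, ∀ v ∈ N, f i v • a i ∈ N) → N = ⊥ ∨ N = ⊤)
    {U : Submodule F (ExteriorAlgebra F V)}
    (hU : ∀ i, ∀ x ∈ U, rankOneDerivation (a i) (f i) x ∈ U)
    (b : V) (g : Dual F V) : ∀ x ∈ U, rankOneDerivation b g x ∈ U := by
  obtain ⟨j⟩ := ‹Nonempty κ›
  have hb : ∀ b, ∀ x ∈ U, rankOneDerivation b (f j) x ∈ U := by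
    let N : Submodule F V :=
      { carrier := {b | ∀ x ∈ U, rankOneDerivation b (f j) x ∈ U}
        add_mem' := fun {b c} hb hc x hx => by
          rw [rankOneDerivation_apply, map_add, add_mul]
          exact add_mem (hb x hx) (hc x hx)
        zero_mem' := fun x _ => by simp [rankOneDerivation_apply]
        smul_mem' := fun r b hb x hx => by
          rw [rankOneDerivation_apply, map_smul, smul_mul_assoc]
          exact Submodule.smul_mem _ _ (hb x hx) }
    have hN : N = ⊤ := by
      refine (hirr N fun i v hv x hx => ?_).resolve_left fun h => ?_
      · have := (rankOneDerivation_mem_of_commutators (hfa i) (hU i) hv hx).1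
        rwa [rankOneDerivation_apply, map_smul, smul_mul_assoc]
      · have haj : a j ∈ N := hU j
        rw [h, Submodule.mem_bot] at haj
        exact hfa j (by rw [haj, map_zero])
    intro b
    have : b ∈ N := hN ▸ Submodule.mem_top
    exact this
  let M : Submodule F (Dual F V) :=
    { carrier := {g | ∀ x ∈ U, rankOneDerivation b g x ∈ U}
      add_mem' := fun {g h} hg hh x hx => by
        rw [rankOneDerivation_apply, contract_add, mul_add]
        exact add_mem (hg x hx) (hh x hx)
      zero_mem' := fun x _ => by simp [rankOneDerivation_apply, contract]
      smul_mem' := fun r g hg x hx => by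
        rw [rankOneDerivation_apply, contract_smul, mul_smul_comm]
        exact Submodule.smul_mem _ _ (hg x hx) }
  have hN : M.dualCoannihilator = ⊥ := by
    refine (hirr _ fun i v hv => ?_).resolve_right fun h => ?_
    · rw [Submodule.mem_dualCoannihilator] at hv ⊢
      intro g hg
      have hgM : g (a i) • f i ∈ M := fun x hx => by
        have := (rankOneDerivation_mem_of_commutators (hfa i) (hU i) hg hx).2
        rwa [rankOneDerivation_apply, contract_smul, mul_smul_comm]
      have := hv _ hgM
      rw [map_smul, smul_eq_mul, mul_comm]
      exact this
    · have haj : a j ∈ M.dualCoannihilator := h ▸ Submodule.mem_top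
      exact hfa j ((Submodule.mem_dualCoannihilator _).1 haj (f j) (hb b))
  have hM : M = ⊤ := by
    rw [← Subspace.dualCoannihilator_dualAnnihilator_eq (W := M), hN,
      Submodule.dualAnnihilator_bot]
  have : g ∈ M := hM ▸ Submodule.mem_top
  exact this

end ExteriorAlgebra

lemma IsGenReflection.exists_eq_add_smul {F V : Type*} [Field F] [AddCommGroup V] [Module F V]
    {s : Module.End F V} (hs : IsGenReflection s) :
    ∃ (a : V) (f : Dual F V), f a ≠ 0 ∧ ∀ v, s v = v + f v • a := by
  obtain ⟨hdiag, hrank⟩ := hs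
  let b : Basis Unit F (LinearMap.range (s - 1)) := Module.basisUnique Unit hrank
  let a : V := b ()
  let f : Dual F V := b.coord () ∘ₗ (s - 1).rangeRestrict
  have hs : ∀ v, s v = v + f v • a := by
    intro v
    have h : f v • a = s v - v := by
      simpa [f, a] using congrArg Subtype.val (b.sum_repr ((s - 1).rangeRestrict v))
    rw [h, add_sub_cancel]
  refine ⟨a, f, fun hfa => ?_, hs⟩
  have hker : (⊤ : Submodule F V) ≤ LinearMap.ker f := by
    rw [← hdiag]
    refine iSup_le fun μ v hv => ?_
    rw [Module.End.mem_eigenspace_iff, hs] at hv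
    have hfv : f v = μ * f v := by simpa [hfa] using congrArg f hv
    rw [LinearMap.mem_ker]
    by_contra h
    obtain rfl : μ = 1 := (mul_right_cancel₀ h (by rw [← hfv, one_mul])).symm
    rw [one_smul, add_eq_left] at hv
    rcases smul_eq_zero.1 hv with h' | h'
    · exact h h'
    · exact b.ne_zero () (Subtype.ext h')
  have hzero : s - 1 = 0 := by
    ext v
    have : f v = 0 := hker (Submodule.mem_top (x := v))
    simp [hs, this]
  rw [hzero, LinearMap.range_zero, finrank_bot] at hrank
  exact zero_ne_one hrank

/-- A finite-dimensional subspace stable under a generating set is a subrepresentation. -/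
lemma Representation.apply_mem_of_closure_eq_top {F V W : Type*} [Field F] [AddCommGroup V]
    [Module F V] [FiniteDimensional F V] [Group W] (ρ : Representation F W V) {S : Set W}
    (hS : Subgroup.closure S = ⊤) {N : Submodule F V} (h : ∀ s ∈ S, ∀ v ∈ N, ρ s v ∈ N) (w : W) :
    ∀ v ∈ N, ρ w v ∈ N := by
  have hinj : ∀ w, Function.Injective (ρ w) := fun w x y hxy => by
    simpa using congrArg (ρ w⁻¹) hxy
  have hw : w ∈ Subgroup.closure S := hS ▸ Subgroup.mem_top w
  induction hw using Subgroup.closure_induction with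
  | mem s hs => exact h s hs
  | one => simp
  | mul x y _ _ hx hy => intro v hv; rw [map_mul]; exact hx _ (hy v hv)
  | inv x _ hx =>
    have hmap : N.map (ρ x) = N :=
      Submodule.eq_of_le_of_finrank_eq (Submodule.map_le_iff_le_comap.2 hx)
        (LinearEquiv.finrank_eq (Submodule.equivMapOfInjective _ (hinj x) N)).symm
    intro v hv
    rw [← hmap] at hv
    obtain ⟨u, hu, rfl⟩ := hv
    simpa using hu

/-- Every exterior power of an irreducible reflection representation is irreducible. -/
theorem stmt_15 {F V W : Type*} [Field F] [CharZero F] [AddCommGroup V] [Module F V]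
    [FiniteDimensional F V] [Nontrivial V] [Group W]
    (k : ℕ) (s : Fin k → W) (hgen : Subgroup.closure (Set.range s) = ⊤)
    (ρ : Representation F W V)
    (hirr : ∀ U : Submodule F V, (∀ w : W, ∀ v ∈ U, ρ w v ∈ U) → U = ⊥ ∨ U = ⊤)
    (hrefl : ∀ i, IsGenReflection (ρ (s i)))
    (n : ℕ) (hn : Module.finrank F V = n) (d : ℕ) (hd : d ≤ n) :
    Nontrivial ↥(⋀[F]^d V) ∧
    ∀ U : Submodule F ↥(⋀[F]^d V),
      (∀ w : W, ∀ x ∈ U, extMap d (ρ w) x ∈ U) → U = ⊥ ∨ U = ⊤ := by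
  constructor
  · refine Module.nontrivial_of_finrank_pos (R := F) ?_
    rw [exteriorPower.finrank_eq, hn]
    exact Nat.choose_pos hd
  intro U hU
  rcases k.eq_zero_or_pos with rfl | hk
  · obtain ⟨v, hv⟩ := exists_ne (0 : V)
    have htop : Submodule.span F {v} = ⊤ := by
      refine (hirr _ (ρ.apply_mem_of_closure_eq_top hgen ?_)).resolve_left
        (by simpa using hv)
      rintro _ ⟨i, -⟩
      exact i.elim0
    have hn1 : n = 1 := by rw [← hn, ← finrank_top, ← htop, finrank_span_singleton hv]
    have h1 : Module.finrank F ↥(⋀[F]^d V) = 1 := by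
      rw [exteriorPower.finrank_eq, hn]
      subst hn1
      interval_cases d <;> rfl
    have := is_simple_module_of_finrank_eq_one (A := F) h1
    exact eq_bot_or_eq_top U
  have : Nonempty (Fin k) := ⟨⟨0, hk⟩⟩
  choose a f hfa hs using fun i => (hrefl i).exists_eq_add_smul
  have hU' : ∀ b g, ∀ x ∈ U.map (⋀[F]^d V).subtype,
      rankOneDerivation b g x ∈ U.map (⋀[F]^d V).subtype := by
    refine rankOneDerivation_mem_of_irreducible hfa (fun N hN => hirr N ?_) ?_
    · refine ρ.apply_mem_of_closure_eq_top hgen ?_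
      rintro _ ⟨i, rfl⟩ v hv
      rw [hs]
      exact add_mem hv (hN i v hv)
    · rintro i _ ⟨x, hx, rfl⟩
      refine ⟨extMap d (ρ (s i)) x - x, sub_mem (hU (s i) x hx) hx, ?_⟩
      change ExteriorAlgebra.map (ρ (s i)) (x : ExteriorAlgebra F V) - x = _
      rw [map_eq_add_rankOneDerivation (hs i), add_sub_cancel_left]
      rfl
  refine or_iff_not_imp_left.2 fun hbot => ?_
  obtain ⟨x, hx, hx0⟩ := U.ne_bot_iff.1 hbot
  have hle : ⋀[F]^(0 + d) V ≤ U.map (⋀[F]^d V).subtype := by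
    refine exteriorPower_le_of_mul_mem hU' x.2 (by simpa using hx0) fun z hz => ?_
    obtain ⟨r, rfl⟩ := mem_exteriorPower_zero.1 hz
    rw [← Algebra.smul_def]
    exact Submodule.smul_mem _ _ ⟨x, hx, rfl⟩
  rw [Nat.zero_add] at hle
  refine eq_top_iff.2 fun y _ => ?_
  obtain ⟨z, hz, hzy⟩ := hle y.2
  rwa [← Subtype.ext hzy]
end

section
/- Let W be a group with finite generating set S = {s_1, ..., s_k}, and let (V_1, ρ_1), (V_2, ρ_2) be irreducible reflection representations of (W, S) over a field of characteristic 0. Suppose Λ^{d_1} V_1 ≅ Λ^{d_2} V_2 as W-modules for some integers 1 ≤ d_ι ≤ dim V_ι - 1 (ι = 1, 2). Then V_1 ≅ V_2 as W-modules. -/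
open ExteriorAlgebra Module

section CompatiblePairs

variable {F : Type*} [Field F]

lemma peirce_mem [CharZero F] {B : Type*} [Ring B] [Algebra F B] {R : Submodule F B}
    (hbr : ∀ x ∈ R, ∀ y ∈ R, x * y - y * x ∈ R) {p z : B} (hp : p ∈ R) (hpp : p * p = p)
    (hz : z ∈ R) : p * z - p * z * p ∈ R ∧ z * p - p * z * p ∈ R := by
  have h1 := hbr p hp z hz
  have h2 := hbr p hp _ h1
  have e1 : p * (p * z) = p * z := by rw [← mul_assoc, hpp]
  have e2 : z * p * p = z * p := by rw [mul_assoc, hpp]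
  have h3 : p * z - p * z * p =
      (2⁻¹ : F) • ((p * z - z * p) + (p * (p * z - z * p) - (p * z - z * p) * p)) := by
    rw [eq_inv_smul_iff₀ two_ne_zero, two_smul, mul_sub, sub_mul, e1, e2, mul_assoc]
    abel
  have h4 : z * p - p * z * p =
      (2⁻¹ : F) • ((p * (p * z - z * p) - (p * z - z * p) * p) - (p * z - z * p)) := by
    rw [eq_inv_smul_iff₀ two_ne_zero, two_smul, mul_sub, sub_mul, e1, e2, mul_assoc]
    abel
  exact ⟨h3 ▸ R.smul_mem _ (R.add_mem h1 h2), h4 ▸ R.smul_mem _ (R.sub_mem h2 h1)⟩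

variable {A₁ A₂ : Type*} [Ring A₁] [Algebra F A₁] [Ring A₂] [Algebra F A₂]

/-- A Lie subalgebra of `A₁ × A₂` which is the graph of an injective partial map. -/
structure IsLieGraph (R : Submodule F (A₁ × A₂)) : Prop where
  bracket : ∀ x ∈ R, ∀ y ∈ R, x * y - y * x ∈ R
  fst_inj : ∀ x ∈ R, x.1 = 0 → x = 0
  snd_inj : ∀ x ∈ R, x.2 = 0 → x = 0

/-- A nonzero idempotent whose corner ring consists of scalar multiples of it. -/
structure IsRankOneIdem {A : Type*} [Ring A] [Algebra F A] (p : A) : Prop where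
  idem : p * p = p
  ne_zero : p ≠ 0
  corner : ∀ x, ∃ t : F, p * x * p = t • p

/-- Scaling the two components of `x` by `t₁` and `t₂`. -/
def scale (t₁ t₂ : F) (x : A₁ × A₂) : A₁ × A₂ := (t₁ • x.1, t₂ • x.2)

lemma IsLieGraph.eq_or_eq_zero {R : Submodule F (A₁ × A₂)} (hR : IsLieGraph R) {x : A₁ × A₂}
    (hx : x ∈ R) {t₁ t₂ : F} (h : scale t₁ t₂ x ∈ R) : t₁ = t₂ ∨ x = 0 := by
  have h1 := R.sub_mem h (R.smul_mem t₁ hx)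
  have h2 := hR.fst_inj _ h1 (by simp [scale])
  have h3 : (t₂ - t₁) • x.2 = 0 := by
    have := congrArg Prod.snd h2
    simpa [scale, sub_smul] using this
  rcases smul_eq_zero.1 h3 with h | h
  · exact Or.inl (sub_eq_zero.1 h).symm
  · exact Or.inr (hR.snd_inj _ hx h)

lemma scale_self (t : F) (x : A₁ × A₂) : scale t t x = t • x := rfl

lemma scale_mul (t₁ t₂ : F) (x y : A₁ × A₂) : scale t₁ t₂ x * y = scale t₁ t₂ (x * y) := by
  ext <;> simp [scale]

lemma mul_scale (t₁ t₂ : F) (x y : A₁ × A₂) : x * scale t₁ t₂ y = scale t₁ t₂ (x * y) := by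
  ext <;> simp [scale]

lemma scale_sub (t₁ t₂ : F) (x y : A₁ × A₂) :
    scale t₁ t₂ (x - y) = scale t₁ t₂ x - scale t₁ t₂ y := by
  ext <;> simp [scale, smul_sub]

lemma IsLieGraph.mul_mem_of_opposite [CharZero F] {R : Submodule F (A₁ × A₂)} (hR : IsLieGraph R)
    {p u y : A₁ × A₂} (hp : p ∈ R)
    (hu : u ∈ R) (hy : y ∈ R) (hpu : p * u = u) (hup : u * p = 0)
    {t₁ t₂ : F} (ht : u * y = scale t₁ t₂ p) : u * y ∈ R := by
  have huu : u * u = 0 := by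
    calc u * u = u * (p * u) := by rw [hpu]
      _ = 0 := by rw [← mul_assoc, hup, zero_mul]
  have h1 := hR.bracket _ (hR.bracket u hu y hy) u hu
  have h2 : u * y * u = scale t₁ t₂ u := by
    rw [ht]
    conv_rhs => rw [← hpu]
    ext <;> simp [scale]
  have h3 : (u * y - y * u) * u - u * (u * y - y * u) = (2 : F) • (u * y * u) := by
    rw [sub_mul, mul_sub, ← mul_assoc u u y, huu, mul_assoc y u u, huu, two_smul, mul_assoc]
    simp
  rw [h3, h2, R.smul_mem_iff two_ne_zero] at h1
  rcases hR.eq_or_eq_zero hu h1 with h | h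
  · rw [ht, h, scale_self]
    exact R.smul_mem _ hp
  · simp [h]

lemma exists_corner {p : A₁ × A₂} (h₁ : IsRankOneIdem (F := F) p.1)
    (h₂ : IsRankOneIdem (F := F) p.2) (x : A₁ × A₂) :
    ∃ t₁ t₂ : F, p * x * p = scale t₁ t₂ p := by
  obtain ⟨t₁, e₁⟩ := h₁.corner x.1
  obtain ⟨t₂, e₂⟩ := h₂.corner x.2
  exact ⟨t₁, t₂, Prod.ext e₁ e₂⟩

lemma IsRankOneIdem.corner_scalar_of_degenerate {A : Type*} [Ring A] [Algebra F A] {p q : A}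
    (hp : IsRankOneIdem (F := F) p) (hq : IsRankOneIdem (F := F) q) {t : F}
    (ht : p * q * p = t • p) (h1 : p * q = p * q * p) (h2 : q * p = p * q * p) :
    (t = 0 ∧ p ≠ q) ∨ (t = 1 ∧ p = q) := by
  have h3 : t • p = (t * t) • p := by
    calc t • p = p * q * q := by rw [mul_assoc, hq.idem, h1, ht]
      _ = (t * t) • p := by rw [h1, ht, smul_mul_assoc, h1, ht, smul_smul]
  have h4 : t = t * t := smul_left_injective F hp.ne_zero h3
  have h5 : t = 0 ∨ t = 1 := by
    have : t * (t - 1) = 0 := by rw [mul_sub, ← h4]; ring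
    rcases mul_eq_zero.1 this with h | h
    · exact Or.inl h
    · exact Or.inr (sub_eq_zero.1 h)
  rcases h5 with rfl | rfl
  · refine Or.inl ⟨rfl, ?_⟩
    rintro rfl
    rw [hp.idem, hp.idem, zero_smul] at ht
    exact hp.ne_zero ht
  · refine Or.inr ⟨rfl, ?_⟩
    rw [one_smul] at ht
    obtain ⟨r, hr⟩ := hq.corner p
    have h6 : p = r • q := by rw [← hr, h2, ht, h1, ht]
    have hr0 : r ≠ 0 := by
      rintro rfl
      exact hp.ne_zero (by rw [h6, zero_smul])
    have h7 := hp.idem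
    rw [h6, smul_mul_smul_comm, hq.idem] at h7
    have h8 : r * r = r := smul_left_injective F hq.ne_zero h7
    rw [h6, mul_left_cancel₀ hr0 (h8.trans (mul_one r).symm), one_smul]

lemma IsLieGraph.corner_mem [CharZero F] {R : Submodule F (A₁ × A₂)} (hR : IsLieGraph R) {p q : A₁ × A₂}
    (hp : p ∈ R) (hp₁ : IsRankOneIdem (F := F) p.1) (hp₂ : IsRankOneIdem (F := F) p.2)
    (hq : q ∈ R) (hq₁ : IsRankOneIdem (F := F) q.1) (hq₂ : IsRankOneIdem (F := F) q.2) :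
    p * q * p ∈ R := by
  obtain ⟨t₁, t₂, ht⟩ := exists_corner hp₁ hp₂ q
  have hpp : p * p = p := Prod.ext hp₁.idem hp₂.idem
  have hqq : q * q = q := Prod.ext hq₁.idem hq₂.idem
  obtain ⟨hu, hy⟩ := peirce_mem hR.bracket hp hpp hq
  suffices h : t₁ = t₂ by
    rw [ht, h, scale_self]; exact R.smul_mem _ hp
  have hppx : ∀ x, p * (p * x) = p * x := fun x => by rw [← mul_assoc, hpp]
  have hqqx : ∀ x, q * (q * x) = q * x := fun x => by rw [← mul_assoc, hqq]
  have ht' : p * (q * p) = scale t₁ t₂ p := by rw [← mul_assoc, ht]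
  have htx : ∀ x, p * (q * (p * x)) = scale t₁ t₂ (p * x) := fun x => by
    rw [← mul_assoc, ← mul_assoc, ht, scale_mul]
  have key : ∀ x : A₁ × A₂, x - scale t₁ t₂ x - scale t₁ t₂ x =
      scale (1 - 2 * t₁) (1 - 2 * t₂) x := fun x => by
    ext <;> simp [scale, sub_smul, mul_smul, two_smul, sub_sub]
  have fin : ∀ x ∈ R, scale (1 - 2 * t₁) (1 - 2 * t₂) x ∈ R → t₁ = t₂ ∨ x = 0 := by
    intro x hx h
    refine (hR.eq_or_eq_zero hx h).imp_left fun h => ?_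
    exact mul_left_cancel₀ two_ne_zero (sub_right_injective h)
  have hyq : scale (1 - 2 * t₁) (1 - 2 * t₂) (q * p - p * q * p) ∈ R := by
    rw [← key]
    convert (peirce_mem hR.bracket hp hpp (hR.bracket q hq _ hy)).2 using 1
    simp only [mul_sub, sub_mul, mul_assoc, hpp, hppx, hqqx, ht', htx, mul_scale, scale_mul,
      scale_sub]
    abel
  have huq : scale (1 - 2 * t₁) (1 - 2 * t₂) (p * q - p * q * p) ∈ R := by
    rw [← key]
    convert R.neg_mem (peirce_mem hR.bracket hp hpp (hR.bracket q hq _ hu)).1 using 1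
    simp only [mul_sub, sub_mul, mul_assoc, hpp, hqq, hppx, ht', htx, mul_scale, scale_mul,
      scale_sub]
    abel
  rcases fin _ hy hyq with h | hy0
  · exact h
  rcases fin _ hu huq with h | hu0
  · exact h
  have c₁ := hp₁.corner_scalar_of_degenerate hq₁ (congrArg Prod.fst ht)
    (congrArg Prod.fst (sub_eq_zero.1 hu0)) (congrArg Prod.fst (sub_eq_zero.1 hy0))
  have c₂ := hp₂.corner_scalar_of_degenerate hq₂ (congrArg Prod.snd ht)
    (congrArg Prod.snd (sub_eq_zero.1 hu0)) (congrArg Prod.snd (sub_eq_zero.1 hy0))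
  have hpq : p.1 = q.1 ↔ p.2 = q.2 := by
    have h := R.sub_mem hp hq
    constructor
    · intro e
      exact congrArg Prod.snd (sub_eq_zero.1 (hR.fst_inj _ h (sub_eq_zero.2 e)))
    · intro e
      exact congrArg Prod.fst (sub_eq_zero.1 (hR.snd_inj _ h (sub_eq_zero.2 e)))
  rcases c₁ with ⟨e₁, n₁⟩ | ⟨e₁, n₁⟩ <;> rcases c₂ with ⟨e₂, n₂⟩ | ⟨e₂, n₂⟩
  · rw [e₁, e₂]
  · exact absurd (hpq.2 n₂) n₁
  · exact absurd (hpq.1 n₁) n₂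
  · rw [e₁, e₂]

/-- The elements of `R` all of whose corners at the idempotents `p i` lie in `R`. -/
def cornerSubmodule {ι : Type*} (R : Submodule F (A₁ × A₂)) (p : ι → A₁ × A₂) :
    Submodule F (A₁ × A₂) where
  carrier := {z | z ∈ R ∧ ∀ i, p i * z * p i ∈ R}
  add_mem' := fun ha hb => ⟨R.add_mem ha.1 hb.1, fun i => by
    rw [mul_add, add_mul]; exact R.add_mem (ha.2 i) (hb.2 i)⟩
  zero_mem' := ⟨R.zero_mem, fun i => by simp⟩
  smul_mem' := fun c z hz => ⟨R.smul_mem c hz.1, fun i => by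
    rw [mul_smul_comm, smul_mul_assoc]; exact R.smul_mem c (hz.2 i)⟩

lemma IsLieGraph.mul_mem_cornerSubmodule [CharZero F] {ι : Type*} {R : Submodule F (A₁ × A₂)}
    (hR : IsLieGraph R) {p : ι → A₁ × A₂} (hp : ∀ i, p i ∈ R)
    (hp₁ : ∀ i, IsRankOneIdem (F := F) (p i).1) (hp₂ : ∀ i, IsRankOneIdem (F := F) (p i).2)
    {z : A₁ × A₂} (hz : z ∈ cornerSubmodule R p) (j : ι) :
    p j * z ∈ cornerSubmodule R p := by
  have hpp : ∀ i, p i * p i = p i := fun i => Prod.ext (hp₁ i).idem (hp₂ i).idem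
  refine ⟨?_, fun i => ?_⟩
  · have := R.add_mem (peirce_mem hR.bracket (hp j) (hpp j) hz.1).1 (hz.2 j)
    rwa [sub_add_cancel] at this
  · have hu := (peirce_mem hR.bracket (hp i) (hpp i) (hp j)).1
    have hy := (peirce_mem hR.bracket (hp i) (hpp i) hz.1).2
    have hpj := hR.corner_mem (hp i) (hp₁ i) (hp₂ i) (hp j) (hp₁ j) (hp₂ j)
    have hpz := hz.2 i
    set P := p i
    set Q := p j
    have hPP : P * P = P := hpp i
    have hPPx : ∀ x, P * (P * x) = P * x := fun x => by rw [← mul_assoc, hPP]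
    have e : P * (Q * z) * P =
        (P * Q - P * Q * P) * (z * P - P * z * P) + (P * Q * P) * (P * z * P) := by
      simp only [mul_sub, sub_mul, mul_assoc, hPPx]
      abel
    rw [e]
    obtain ⟨t₁, t₂, ht⟩ := exists_corner (hp₁ i) (hp₂ i)
      ((P * Q - P * Q * P) * (z * P - P * z * P))
    refine R.add_mem (hR.mul_mem_of_opposite (p := P) (hp i) hu hy (t₁ := t₁) (t₂ := t₂) ?_ ?_ ?_) ?_
    · simp only [mul_sub, mul_assoc, hPPx]
    · simp only [sub_mul, mul_assoc, hPP, sub_self]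
    · rw [← ht]
      change _ = P * _ * P
      simp only [sub_mul, mul_sub, mul_assoc, hPPx, hPP]
    · obtain ⟨t₁, t₂, ht⟩ := exists_corner (hp₁ i) (hp₂ i) Q
      change P * Q * P = scale t₁ t₂ P at ht
      rw [ht] at hpj ⊢
      rcases hR.eq_or_eq_zero (hp i) hpj with h | h
      · rw [h, scale_self, smul_mul_assoc]
        refine R.smul_mem _ ?_
        simpa only [mul_assoc, hPPx] using hpz
      · change P = 0 at h
        simp [h]

lemma IsLieGraph.idem_mem_cornerSubmodule [CharZero F] {ι : Type*} {R : Submodule F (A₁ × A₂)}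
    (hR : IsLieGraph R) {p : ι → A₁ × A₂} (hp : ∀ i, p i ∈ R)
    (hp₁ : ∀ i, IsRankOneIdem (F := F) (p i).1) (hp₂ : ∀ i, IsRankOneIdem (F := F) (p i).2)
    (j : ι) : p j ∈ cornerSubmodule R p :=
  ⟨hp j, fun i => hR.corner_mem (hp i) (hp₁ i) (hp₂ i) (hp j) (hp₁ j) (hp₂ j)⟩

lemma IsLieGraph.mul_idem_mem [CharZero F] {ι : Type*} {R : Submodule F (A₁ × A₂)}
    (hR : IsLieGraph R) {p : ι → A₁ × A₂} (hp : ∀ i, p i ∈ R)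
    (hp₁ : ∀ i, IsRankOneIdem (F := F) (p i).1) (hp₂ : ∀ i, IsRankOneIdem (F := F) (p i).2)
    {z : A₁ × A₂} (hz : z ∈ cornerSubmodule R p) (j : ι) : z * p j ∈ R := by
  have := R.add_mem (peirce_mem hR.bracket (hp j)
    (Prod.ext (hp₁ j).idem (hp₂ j).idem) hz.1).2 (hz.2 j)
  rwa [sub_add_cancel] at this

end CompatiblePairs

section ExteriorDerivation

variable {F V : Type*} [Field F] [AddCommGroup V] [Module F V]

/-- The algebra map `v ↦ v + ε X v` to the dual numbers over the exterior algebra. -/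
noncomputable def extDualNumberHom (X : Module.End F V) :
    ExteriorAlgebra F V →ₐ[F] DualNumber (ExteriorAlgebra F V) :=
  ExteriorAlgebra.lift F ⟨
    { toFun := fun v => TrivSqZeroExt.inl (ι F v) + TrivSqZeroExt.inr (ι F (X v))
      map_add' := fun v w => by ext <;> simp
      map_smul' := fun c v => by ext <;> simp }, fun v => by
    ext
    · simp
    · simp⟩

lemma fst_extDualNumberHom (X : Module.End F V) (z : ExteriorAlgebra F V) :
    (extDualNumberHom X z).fst = z := by
  induction z using ExteriorAlgebra.induction with
  | algebraMap r => rw [AlgHom.commutes]; rfl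
  | ι v => simp [extDualNumberHom]
  | mul a b ha hb => rw [map_mul, TrivSqZeroExt.fst_mul, ha, hb]
  | add a b ha hb => rw [map_add, TrivSqZeroExt.fst_add, ha, hb]

/-- The derivation of the exterior algebra extending an endomorphism. -/
noncomputable def extDerivation (X : Module.End F V) : Module.End F (ExteriorAlgebra F V) :=
  TrivSqZeroExt.sndHom (ExteriorAlgebra F V) (ExteriorAlgebra F V) |>.restrictScalars F |>.comp
    (extDualNumberHom X).toLinearMap

lemma extDerivation_ι (X : Module.End F V) (v : V) : extDerivation X (ι F v) = ι F (X v) := by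
  simp [extDerivation, extDualNumberHom]

lemma extDerivation_mul (X : Module.End F V) (a b : ExteriorAlgebra F V) :
    extDerivation X (a * b) = a * extDerivation X b + extDerivation X a * b := by
  simp [extDerivation, fst_extDualNumberHom]

lemma extDerivation_algebraMap (X : Module.End F V) (r : F) :
    extDerivation X (algebraMap F _ r) = 0 := by
  simp only [extDerivation, LinearMap.comp_apply, AlgHom.toLinearMap_apply, AlgHom.commutes]
  rfl

lemma extDerivation_add (X Y : Module.End F V) (z : ExteriorAlgebra F V) :
    extDerivation (X + Y) z = extDerivation X z + extDerivation Y z := by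
  induction z using ExteriorAlgebra.induction with
  | algebraMap r => simp only [extDerivation_algebraMap, add_zero]
  | ι v => simp [extDerivation_ι]
  | mul a b ha hb => simp only [extDerivation_mul, ha, hb, mul_add, add_mul]; abel
  | add a b ha hb => simp only [map_add, ha, hb]; abel

lemma extDerivation_smul (c : F) (X : Module.End F V) (z : ExteriorAlgebra F V) :
    extDerivation (c • X) z = c • extDerivation X z := by
  induction z using ExteriorAlgebra.induction with
  | algebraMap r => simp only [extDerivation_algebraMap, smul_zero]
  | ι v => simp [extDerivation_ι]
  | mul a b ha hb =>
    simp only [extDerivation_mul, ha, hb, smul_add, mul_smul_comm, smul_mul_assoc]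
  | add a b ha hb => simp only [map_add, ha, hb, smul_add]

lemma extDerivation_bracket (X Y : Module.End F V) (z : ExteriorAlgebra F V) :
    extDerivation (X * Y - Y * X) z =
      extDerivation X (extDerivation Y z) - extDerivation Y (extDerivation X z) := by
  induction z using ExteriorAlgebra.induction with
  | algebraMap r => simp only [extDerivation_algebraMap, map_zero, sub_zero]
  | ι v => simp [extDerivation_ι]
  | mul a b ha hb =>
    simp only [extDerivation_mul, ha, hb, map_add, mul_sub, sub_mul]
    abel
  | add a b ha hb => simp only [map_add, ha, hb]; abel

lemma extDerivation_mem (X : Module.End F V) {d : ℕ} {z : ExteriorAlgebra F V}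
    (hz : z ∈ ⋀[F]^d V) : extDerivation X z ∈ ⋀[F]^d V := by
  induction hz using Submodule.pow_induction_on_left' with
  | algebraMap r => rw [extDerivation_algebraMap]; exact Submodule.zero_mem _
  | add x y i hx hy hx' hy' => rw [map_add]; exact Submodule.add_mem _ hx' hy'
  | mem_mul m hm i x hx hx' =>
    obtain ⟨v, rfl⟩ := hm
    rw [extDerivation_mul, extDerivation_ι, Nat.succ_eq_add_one, exteriorPower, pow_succ']
    exact Submodule.add_mem _ (Submodule.mul_mem_mul ⟨v, rfl⟩ hx')
      (Submodule.mul_mem_mul ⟨_, rfl⟩ hx)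

lemma extDerivation_smul_one (c : F) {d : ℕ} {z : ExteriorAlgebra F V}
    (hz : z ∈ ⋀[F]^d V) : extDerivation (c • (1 : Module.End F V)) z = (d * c) • z := by
  induction hz using Submodule.pow_induction_on_left' with
  | algebraMap r => rw [extDerivation_algebraMap]; simp
  | add x y i hx hy hx' hy' => rw [map_add, hx', hy', smul_add]
  | mem_mul m hm i x hx hx' =>
    obtain ⟨v, rfl⟩ := hm
    rw [extDerivation_mul, extDerivation_ι, hx']
    simp only [LinearMap.smul_apply, Module.End.one_apply, map_smul, mul_smul_comm,
      smul_mul_assoc, ← add_smul]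
    congr 1
    push_cast
    ring

lemma extDerivation_smulRight (f : Module.Dual F V) (α : V) (z : ExteriorAlgebra F V) :
    extDerivation (f.smulRight α) z = ι F α * CliffordAlgebra.contractLeft (Q := 0) f z := by
  induction z using CliffordAlgebra.left_induction with
  | algebraMap r =>
    rw [CliffordAlgebra.contractLeft_algebraMap, mul_zero]
    exact extDerivation_algebraMap _ r
  | add x y hx hy => rw [map_add, map_add, hx, hy, mul_add]
  | ι_mul x v hx =>
    rw [CliffordAlgebra.contractLeft_ι_mul, mul_sub, ← mul_assoc]
    refine (extDerivation_mul _ (ι F v) x).trans ?_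
    rw [hx, extDerivation_ι, ← mul_assoc]
    have h := ι_add_mul_swap (R := F) v α
    rw [eq_neg_of_add_eq_zero_left h, LinearMap.smulRight_apply, map_smul, smul_mul_assoc,
      mul_smul_comm, neg_mul]
    exact (add_comm _ _).trans (sub_eq_add_neg _ _).symm

lemma extDerivation_smulRight_sq (f : Module.Dual F V) (α : V) (z : ExteriorAlgebra F V) :
    extDerivation (f.smulRight α) (extDerivation (f.smulRight α) z) =
      f α • extDerivation (f.smulRight α) z := by
  simp only [extDerivation_smulRight]
  refine (congrArg _ (CliffordAlgebra.contractLeft_ι_mul f α _)).trans ?_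
  rw [CliffordAlgebra.contractLeft_contractLeft, mul_zero, sub_zero, mul_smul_comm]

lemma map_one_add_smulRight (f : Module.Dual F V) (α : V) (z : ExteriorAlgebra F V) :
    ExteriorAlgebra.map (1 + f.smulRight α) z = z + extDerivation (f.smulRight α) z := by
  rw [extDerivation_smulRight]
  induction z using CliffordAlgebra.left_induction with
  | algebraMap r =>
    rw [CliffordAlgebra.contractLeft_algebraMap, mul_zero, add_zero]
    exact AlgHom.commutes _ r
  | add x y hx hy => rw [map_add, map_add, hx, hy, mul_add]; abel
  | ι_mul x v hx =>
    rw [CliffordAlgebra.contractLeft_ι_mul, mul_sub, ← mul_assoc]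
    refine (map_mul (ExteriorAlgebra.map (1 + f.smulRight α)) (ι F v) x).trans ?_
    rw [hx, map_apply_ι, LinearMap.add_apply, Module.End.one_apply, LinearMap.smulRight_apply,
      map_add, map_smul, mul_add, add_mul, add_mul, smul_mul_assoc, smul_mul_assoc, mul_smul_comm,
      ← mul_assoc, ← mul_assoc, ι_sq_zero, zero_mul, smul_zero, add_zero,
      eq_neg_of_add_eq_zero_left (ι_add_mul_swap (R := F) v α), neg_mul, add_assoc, sub_eq_add_neg]

lemma ιMulti_ne_zero {j : ℕ} {m : Fin j → V} (hm : LinearIndependent F m) :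
    ιMulti F j m ≠ 0 := by
  intro h
  have h1 := (exteriorPower.ιMulti_family_linearIndependent_field (n := j) hm).ne_zero
    ⟨Finset.univ, by simp⟩
  apply h1
  apply Subtype.ext
  rw [exteriorPower.ιMulti_family_apply_coe, ιMulti_family]
  set σ := Set.powersetCard.ofFinEmbEquiv.symm
    (⟨Finset.univ, by simp⟩ : Set.powersetCard (Fin j) j)
  have hσ : Function.Bijective σ := Finite.injective_iff_bijective.1 σ.injective
  have h2 := (ιMulti F j (M := V)).map_perm m (Equiv.ofBijective σ hσ)
  rw [h, smul_zero] at h2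
  exact h2

lemma exists_ιMulti_mul_ne_zero [FiniteDimensional F V] (r : ℕ) : ∀ {j : ℕ} {m : Fin j → V},
    LinearIndependent F m → j + r ≤ Module.finrank F V →
    ∃ z ∈ ⋀[F]^r V, ιMulti F j m * z ≠ 0 := by
  induction r with
  | zero =>
    intro j m hm _
    refine ⟨1, ?_, by simpa using ιMulti_ne_zero hm⟩
    rw [exteriorPower, pow_zero]
    exact Submodule.one_le.1 le_rfl
  | succ r ih =>
    intro j m hm hr
    obtain ⟨x, hx⟩ := exists_linearIndependent_snoc_of_lt_finrank hm (by omega)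
    obtain ⟨z, hz, hz0⟩ := ih hx (by omega)
    refine ⟨ι F x * z, ?_, ?_⟩
    · rw [exteriorPower, pow_succ']
      exact Submodule.mul_mem_mul ⟨x, rfl⟩ hz
    · have h : ιMulti F (j + 1) (Fin.snoc m x : Fin (j + 1) → V) = ιMulti F j m * ι F x := by
        refine (congrArg _ (Fin.append_right_eq_snoc m ![x])).symm.trans ?_
        rw [← ιMulti_mul_ιMulti]
        simp
      rwa [h, mul_assoc] at hz0

lemma eq_zero_of_extDerivation_eq_zero [CharZero F] [FiniteDimensional F V] {d : ℕ} (hd : 1 ≤ d)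
    (hd' : d + 1 ≤ Module.finrank F V) (X : Module.End F V)
    (hX : ∀ z ∈ ⋀[F]^d V, extDerivation X z = 0) : X = 0 := by
  obtain ⟨c, rfl⟩ : ∃ c : F, X = c • 1 := by
    refine LinearMap.exists_eq_smul_id_of_forall_notLinearIndependent fun v hv => ?_
    obtain ⟨z, hz, hz0⟩ := exists_ιMulti_mul_ne_zero (d - 1) hv (by omega)
    have h1 := hX (ι F v * z) (by
      obtain ⟨d, rfl⟩ := Nat.exists_eq_add_of_le' hd
      rw [exteriorPower, pow_succ']
      exact Submodule.mul_mem_mul ⟨v, rfl⟩ hz)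
    rw [extDerivation_mul, extDerivation_ι] at h1
    apply hz0
    have h2 := congrArg (ι F v * ·) h1
    simpa [mul_add, ← mul_assoc, ιMulti_succ_apply, Matrix.vecTail] using h2
  obtain ⟨z, hz, hz0⟩ := exists_ιMulti_mul_ne_zero (F := F) (V := V) d (m := Fin.elim0)
    (linearIndependent_empty_type) (by omega)
  have h := hX z hz
  rw [extDerivation_smul_one c hz] at h
  rcases smul_eq_zero.1 h with h | h
  · rcases mul_eq_zero.1 h with h | h
    · exact absurd (Nat.cast_eq_zero.1 h) (by omega)
    · rw [h, zero_smul]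
  · exact absurd (by rw [h, mul_zero]) hz0

end ExteriorDerivation

section ExteriorPowerAction

variable {F V : Type*} [Field F] [AddCommGroup V] [Module F V]

/-- The Lie algebra action of endomorphisms on the `d`-th exterior power. -/
noncomputable def extDer (d : ℕ) : Module.End F V →ₗ[F] Module.End F (⋀[F]^d V) where
  toFun X := (extDerivation X).restrict fun _ hz => extDerivation_mem X hz
  map_add' X Y := LinearMap.ext fun z => Subtype.ext (extDerivation_add X Y z)
  map_smul' c X := LinearMap.ext fun z => Subtype.ext (extDerivation_smul c X z)

lemma coe_extDer (d : ℕ) (X : Module.End F V) (z : ⋀[F]^d V) :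
    (extDer d X z : ExteriorAlgebra F V) = extDerivation X z := rfl

lemma extDer_bracket (d : ℕ) (X Y : Module.End F V) (z : ⋀[F]^d V) :
    extDer d (X * Y - Y * X) z = extDer d X (extDer d Y z) - extDer d Y (extDer d X z) :=
  Subtype.ext (extDerivation_bracket X Y z)

lemma extDer_eq_zero [CharZero F] [FiniteDimensional F V] {d : ℕ} (hd : 1 ≤ d)
    (hd' : d ≤ Module.finrank F V - 1) {X : Module.End F V} (hX : ∀ z, extDer d X z = 0) :
    X = 0 :=
  eq_zero_of_extDerivation_eq_zero hd (by omega) X fun z hz =>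
    congrArg Subtype.val (hX ⟨z, hz⟩)

lemma extMap_one_add_smulRight (d : ℕ) (f : Module.Dual F V) (α : V) (z : ⋀[F]^d V) :
    extMap d (1 + f.smulRight α) z = z + extDer d (f.smulRight α) z :=
  Subtype.ext (map_one_add_smulRight f α z)

lemma extDer_smulRight_sq (d : ℕ) (f : Module.Dual F V) (α : V) (z : ⋀[F]^d V) :
    extDer d (f.smulRight α) (extDer d (f.smulRight α) z) = f α • extDer d (f.smulRight α) z :=
  Subtype.ext (extDerivation_smulRight_sq f α z)

variable {V' : Type*} [AddCommGroup V'] [Module F V']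

/-- The pairs of endomorphisms whose actions on exterior powers are intertwined by `e`. -/
noncomputable def intertwinedPairs {d d' : ℕ} (e : ⋀[F]^d V ≃ₗ[F] ⋀[F]^d' V') :
    Submodule F (Module.End F V × Module.End F V') where
  carrier := {Z | ∀ x, e (extDer d Z.1 x) = extDer d' Z.2 (e x)}
  add_mem' := fun {Y Z} hY hZ x => by
    simp only [Prod.fst_add, Prod.snd_add, map_add, LinearMap.add_apply, hY x, hZ x]
  zero_mem' := fun x => by simp
  smul_mem' := fun c Z hZ x => by
    simp only [Prod.smul_fst, Prod.smul_snd, map_smul, LinearMap.smul_apply, hZ x]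

lemma isLieGraph_intertwinedPairs [CharZero F] [FiniteDimensional F V] [FiniteDimensional F V']
    {d d' : ℕ} (hd : 1 ≤ d) (hd₁ : d ≤ Module.finrank F V - 1) (hd' : 1 ≤ d')
    (hd₁' : d' ≤ Module.finrank F V' - 1) (e : ⋀[F]^d V ≃ₗ[F] ⋀[F]^d' V') :
    IsLieGraph (intertwinedPairs e) where
  bracket := fun Y hY Z hZ x => by
    change e (extDer d (Y.1 * Z.1 - Z.1 * Y.1) x) = extDer d' (Y.2 * Z.2 - Z.2 * Y.2) (e x)
    rw [extDer_bracket, extDer_bracket, map_sub, hY, hZ, hZ, hY]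
  fst_inj := fun Z hZ h => Prod.ext h <| extDer_eq_zero hd' hd₁' fun z => by
    rw [← e.apply_symm_apply z, ← hZ, h]
    simp
  snd_inj := fun Z hZ h => Prod.ext (extDer_eq_zero hd hd₁ fun z => by
    rw [← e.map_eq_zero_iff, hZ, h]
    simp) h

end ExteriorPowerAction

section Reflections

variable {F V : Type*} [Field F] [AddCommGroup V] [Module F V]

lemma IsGenReflection.exists_smulRight {s : Module.End F V} (hs : IsGenReflection s) :
    ∃ (f : Module.Dual F V) (α : V), s = 1 + f.smulRight α ∧ f α ≠ 0 := by
  obtain ⟨⟨α, hα⟩, hα0, hspan⟩ := finrank_eq_one_iff'.1 hs.2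
  have hα0' : α ≠ 0 := fun h => hα0 (Subtype.ext h)
  choose c hc using fun v => hspan ⟨(s - 1) v, ⟨v, rfl⟩⟩
  have hc' : ∀ v, c v • α = (s - 1) v := fun v => congrArg Subtype.val (hc v)
  have inj := smul_left_injective F hα0'
  let f : Module.Dual F V :=
    { toFun := c
      map_add' := fun v w => inj (by simp only [add_smul, hc', map_add])
      map_smul' := fun r v => inj (by simp only [smul_assoc, hc', map_smul, RingHom.id_apply]) }
  have hf : s - 1 = f.smulRight α := LinearMap.ext fun v => (hc' v).symm
  refine ⟨f, α, by rw [← hf]; abel, fun h0 => hα0' ?_⟩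
  have hker : (⨆ μ : F, Module.End.eigenspace s μ) ≤ LinearMap.ker (s - 1) := by
    refine iSup_le fun μ v hv => ?_
    rw [Module.End.mem_eigenspace_iff] at hv
    have h1 : (s - 1) v = (μ - 1) • v := by
      rw [LinearMap.sub_apply, hv, sub_smul, one_smul, Module.End.one_apply]
    have h2 : (s - 1) ((s - 1) v) = 0 := by
      rw [hf]
      simp [h0]
    rw [h1, map_smul, h1, smul_smul] at h2
    rw [LinearMap.mem_ker, h1]
    rcases smul_eq_zero.1 h2 with h | h
    · rw [mul_self_eq_zero.1 h, zero_smul]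
    · rw [h, smul_zero]
  have htop : (⨆ μ : F, Module.End.eigenspace s μ) = ⊤ := hs.1
  rw [htop] at hker
  obtain ⟨v, rfl⟩ := hα
  exact hker Submodule.mem_top

lemma isRankOneIdem_smulRight {f : Module.Dual F V} {α : V} (h : f α ≠ 0) :
    IsRankOneIdem (F := F) (A := Module.End F V) ((f α)⁻¹ • f.smulRight α) where
  idem := LinearMap.ext fun v => by
    simp only [Module.End.mul_apply, LinearMap.smul_apply, LinearMap.smulRight_apply, map_smul,
      smul_smul]
    congr 1
    field_simp
  ne_zero := fun h0 => by
    have h1 := LinearMap.congr_fun h0 α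
    rw [LinearMap.smul_apply, LinearMap.smulRight_apply, smul_smul, inv_mul_cancel₀ h,
      one_smul] at h1
    exact h (by rw [h1]; simp)
  corner := fun X => ⟨(f α)⁻¹ * f (X α), LinearMap.ext fun v => by
    simp only [Module.End.mul_apply, LinearMap.smul_apply, LinearMap.smulRight_apply, map_smul,
      smul_smul]
    congr 1
    ring⟩

lemma forall_mem_of_generators {W ι : Type*} [Group W] [FiniteDimensional F V]
    {s : ι → W} (hgen : Subgroup.closure (Set.range s) = ⊤) (ρ : Representation F W V)
    {U : Submodule F V} (hU : ∀ i, ∀ v ∈ U, ρ (s i) v ∈ U) (w : W) : ∀ v ∈ U, ρ w v ∈ U := by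
  have hw : w ∈ Subgroup.closure (Set.range s) := hgen ▸ Subgroup.mem_top w
  induction hw using Subgroup.closure_induction with
  | mem x hx =>
    obtain ⟨i, rfl⟩ := hx
    exact hU i
  | one => simp
  | mul x y _ _ hx hy =>
    intro v hv
    rw [map_mul]
    exact hx _ (hy _ hv)
  | inv x _ hx =>
    have hinv : ∀ v, ρ x⁻¹ (ρ x v) = v := fun v => by
      rw [← Module.End.mul_apply, ← map_mul, inv_mul_cancel, map_one, Module.End.one_apply]
    have hinj : Function.Injective (ρ x) := Function.LeftInverse.injective hinv
    have hle : U.map (ρ x) ≤ U := by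
      rintro _ ⟨v, hv, rfl⟩
      exact hx v hv
    have heq : U.map (ρ x) = U :=
      Submodule.eq_of_le_of_finrank_eq hle (U.equivMapOfInjective _ hinj).finrank_eq.symm
    intro v hv
    rw [← heq] at hv
    obtain ⟨u, hu, rfl⟩ := hv
    rwa [hinv]

end Reflections

section Reconstruction

variable {F V₁ V₂ W : Type*} [Field F] [AddCommGroup V₁] [Module F V₁]
  [AddCommGroup V₂] [Module F V₂] [Group W]

lemma exists_equivariant_equiv_of_graph {ρ₁ : Representation F W V₁} {ρ₂ : Representation F W V₂}
    (hirr₁ : ∀ U : Submodule F V₁, (∀ w : W, ∀ v ∈ U, ρ₁ w v ∈ U) → U = ⊥ ∨ U = ⊤)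
    (hirr₂ : ∀ U : Submodule F V₂, (∀ w : W, ∀ v ∈ U, ρ₂ w v ∈ U) → U = ⊥ ∨ U = ⊤)
    (M : Submodule F (V₁ × V₂)) (hM : ∀ w, ∀ v ∈ M, ρ₁.prod ρ₂ w v ∈ M)
    (hfst : ∀ v ∈ M, v.1 = 0 → v = 0) (hsnd : ∀ v ∈ M, v.2 = 0 → v = 0) (hne : M ≠ ⊥) :
    ∃ f : V₁ ≃ₗ[F] V₂, ∀ (w : W) (v : V₁), f (ρ₁ w v) = ρ₂ w (f v) := by
  obtain ⟨m, hm, hm0⟩ := (Submodule.ne_bot_iff M).1 hne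
  have htop₁ : M.map (LinearMap.fst F V₁ V₂) = ⊤ := by
    refine (hirr₁ _ ?_).resolve_left fun h => hm0 (hfst m hm ?_)
    · rintro w _ ⟨v, hv, rfl⟩
      exact ⟨_, hM w v hv, rfl⟩
    · rw [← Submodule.mem_bot F, ← h]
      exact ⟨m, hm, rfl⟩
  have htop₂ : M.map (LinearMap.snd F V₁ V₂) = ⊤ := by
    refine (hirr₂ _ ?_).resolve_left fun h => hm0 (hsnd m hm ?_)
    · rintro w _ ⟨v, hv, rfl⟩
      exact ⟨_, hM w v hv, rfl⟩
    · rw [← Submodule.mem_bot F, ← h]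
      exact ⟨m, hm, rfl⟩
  let e₁ : M ≃ₗ[F] V₁ := LinearEquiv.ofBijective (LinearMap.fst F V₁ V₂ ∘ₗ M.subtype)
    ⟨(injective_iff_map_eq_zero _).2 fun v h => Subtype.ext (hfst v v.2 h), fun x => by
      obtain ⟨v, hv, rfl⟩ : x ∈ M.map (LinearMap.fst F V₁ V₂) := htop₁ ▸ Submodule.mem_top
      exact ⟨⟨v, hv⟩, rfl⟩⟩
  let e₂ : M ≃ₗ[F] V₂ := LinearEquiv.ofBijective (LinearMap.snd F V₁ V₂ ∘ₗ M.subtype)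
    ⟨(injective_iff_map_eq_zero _).2 fun v h => Subtype.ext (hsnd v v.2 h), fun x => by
      obtain ⟨v, hv, rfl⟩ : x ∈ M.map (LinearMap.snd F V₁ V₂) := htop₂ ▸ Submodule.mem_top
      exact ⟨⟨v, hv⟩, rfl⟩⟩
  refine ⟨e₁.symm.trans e₂, fun w v => ?_⟩
  obtain ⟨u, rfl⟩ := e₁.surjective v
  have h : ρ₁ w (e₁ u) = e₁ ⟨_, hM w u u.2⟩ := rfl
  rw [h, LinearEquiv.trans_apply, LinearEquiv.trans_apply, e₁.symm_apply_apply,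
    e₁.symm_apply_apply]
  rfl

lemma nonempty_of_irreducible {ι : Type*} {s : ι → W}
    (hgen : Subgroup.closure (Set.range s) = ⊤) {ρ : Representation F W V₁}
    (hirr : ∀ U : Submodule F V₁, (∀ w : W, ∀ v ∈ U, ρ w v ∈ U) → U = ⊥ ∨ U = ⊤)
    (hdim : 2 ≤ Module.finrank F V₁) : Nonempty ι := by
  by_contra hι
  rw [not_nonempty_iff] at hι
  rw [Set.range_eq_empty, Subgroup.closure_empty] at hgen
  have htriv : ∀ w : W, w = 1 := fun w => by
    rw [← Subgroup.mem_bot, hgen]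
    exact Subgroup.mem_top w
  have : Nontrivial V₁ := Module.nontrivial_of_finrank_pos (R := F) (by omega)
  obtain ⟨v, hv⟩ := exists_ne (0 : V₁)
  rcases hirr (F ∙ v) fun w u hu => by rwa [htriv w, map_one] with h | h
  · exact hv (Submodule.span_singleton_eq_bot.1 h)
  · have h1 := finrank_span_singleton (K := F) hv
    rw [h, finrank_top] at h1
    omega

end Reconstruction

/-- If `⋀^{d₁} V₁ ≅ ⋀^{d₂} V₂` as `W`-modules for some `1 ≤ dᵢ ≤ dim Vᵢ - 1`, then the two
irreducible reflection representations are themselves isomorphic. -/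
theorem stmt_19 {F V₁ V₂ W : Type*} [Field F] [CharZero F]
    [AddCommGroup V₁] [Module F V₁] [FiniteDimensional F V₁] [Nontrivial V₁]
    [AddCommGroup V₂] [Module F V₂] [FiniteDimensional F V₂] [Nontrivial V₂] [Group W]
    (k : ℕ) (s : Fin k → W) (hgen : Subgroup.closure (Set.range s) = ⊤)
    (ρ₁ : Representation F W V₁) (ρ₂ : Representation F W V₂)
    (hirr₁ : ∀ U : Submodule F V₁, (∀ w : W, ∀ v ∈ U, ρ₁ w v ∈ U) → U = ⊥ ∨ U = ⊤)
    (hirr₂ : ∀ U : Submodule F V₂, (∀ w : W, ∀ v ∈ U, ρ₂ w v ∈ U) → U = ⊥ ∨ U = ⊤)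
    (hrefl₁ : ∀ i, IsGenReflection (ρ₁ (s i)))
    (hrefl₂ : ∀ i, IsGenReflection (ρ₂ (s i)))
    (d₁ d₂ : ℕ) (hd₁ : 1 ≤ d₁) (hd₁' : d₁ ≤ Module.finrank F V₁ - 1)
    (hd₂ : 1 ≤ d₂) (hd₂' : d₂ ≤ Module.finrank F V₂ - 1)
    (e : ↥(⋀[F]^d₁ V₁) ≃ₗ[F] ↥(⋀[F]^d₂ V₂))
    (he : ∀ (w : W) (x : ↥(⋀[F]^d₁ V₁)), e (extMap d₁ (ρ₁ w) x) = extMap d₂ (ρ₂ w) (e x)) :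
    ∃ f : V₁ ≃ₗ[F] V₂, ∀ (w : W) (v : V₁), f (ρ₁ w v) = ρ₂ w (f v) := by
  have hR := isLieGraph_intertwinedPairs hd₁ hd₁' hd₂ hd₂' e
  obtain ⟨i₀⟩ := nonempty_of_irreducible hgen hirr₁ (by omega)
  choose f₁ α₁ hs₁ hn₁ using fun i => (hrefl₁ i).exists_smulRight
  choose f₂ α₂ hs₂ hn₂ using fun i => (hrefl₂ i).exists_smulRight
  have haR : ∀ i, ((f₁ i).smulRight (α₁ i), (f₂ i).smulRight (α₂ i)) ∈ intertwinedPairs e := by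
    intro i x
    have h := he (s i) x
    rwa [hs₁, hs₂, extMap_one_add_smulRight, extMap_one_add_smulRight, map_add,
      add_right_inj] at h
  have hc : ∀ i, f₁ i (α₁ i) = f₂ i (α₂ i) := by
    intro i
    refine (hR.eq_or_eq_zero (haR i) fun x => ?_).resolve_right fun h => ?_
    · simp only [scale, map_smul, LinearMap.smul_apply]
      rw [← extDer_smulRight_sq, ← map_smul, ← extDer_smulRight_sq, haR i, haR i]
    · have h1 := LinearMap.congr_fun (congrArg Prod.fst h) (α₁ i)
      rcases smul_eq_zero.1 (show f₁ i (α₁ i) • α₁ i = 0 from h1) with h2 | h2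
      · exact hn₁ i h2
      · exact hn₁ i (by rw [h2, map_zero])
  let p : Fin k → Module.End F V₁ × Module.End F V₂ := fun i =>
    ((f₁ i (α₁ i))⁻¹ • (f₁ i).smulRight (α₁ i), (f₂ i (α₂ i))⁻¹ • (f₂ i).smulRight (α₂ i))
  have hp₁ : ∀ i, IsRankOneIdem (F := F) (p i).1 := fun i => isRankOneIdem_smulRight (hn₁ i)
  have hp₂ : ∀ i, IsRankOneIdem (F := F) (p i).2 := fun i => isRankOneIdem_smulRight (hn₂ i)
  have hpα₁ : (p i₀).1 (α₁ i₀) = α₁ i₀ := inv_smul_smul₀ (hn₁ i₀) _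
  have hpα₂ : (p i₀).2 (α₂ i₀) = α₂ i₀ := inv_smul_smul₀ (hn₂ i₀) _
  have hp : ∀ i, p i ∈ intertwinedPairs e := fun i => by
    have h := (intertwinedPairs e).smul_mem (f₁ i (α₁ i))⁻¹ (haR i)
    change ((f₁ i (α₁ i))⁻¹ • (f₁ i).smulRight (α₁ i), (f₂ i (α₂ i))⁻¹ • _) ∈ _
    rwa [← hc i]
  let L : (Module.End F V₁ × Module.End F V₂) →ₗ[F] V₁ × V₂ :=
    (LinearMap.applyₗ (α₁ i₀)).prodMap (LinearMap.applyₗ (α₂ i₀))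
  refine exists_equivariant_equiv_of_graph hirr₁ hirr₂
    ((cornerSubmodule (intertwinedPairs e) p).map L)
    (forall_mem_of_generators hgen _ ?_) ?_ ?_ ?_
  · rintro i _ ⟨Z, hZ, rfl⟩
    refine ⟨Z + f₁ i (α₁ i) • (p i * Z), Submodule.add_mem _ hZ
      (Submodule.smul_mem _ _ (hR.mul_mem_cornerSubmodule hp hp₁ hp₂ hZ i)), ?_⟩
    refine Prod.ext ?_ ?_
    · change Z.1 (α₁ i₀) + f₁ i (α₁ i) • (f₁ i (α₁ i))⁻¹ • f₁ i (Z.1 (α₁ i₀)) • α₁ i =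
        ρ₁ (s i) (Z.1 (α₁ i₀))
      rw [smul_inv_smul₀ (hn₁ i), hs₁]
      rfl
    · change Z.2 (α₂ i₀) + f₁ i (α₁ i) • (f₂ i (α₂ i))⁻¹ • f₂ i (Z.2 (α₂ i₀)) • α₂ i =
        ρ₂ (s i) (Z.2 (α₂ i₀))
      rw [hc, smul_inv_smul₀ (hn₂ i), hs₂]
      rfl
  · rintro _ ⟨Z, hZ, rfl⟩ h
    have h' : Z.1 (α₁ i₀) = 0 := h
    have h0 := hR.fst_inj _ (hR.mul_idem_mem hp hp₁ hp₂ hZ i₀) <| LinearMap.ext fun v => by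
      change Z.1 ((f₁ i₀ (α₁ i₀))⁻¹ • f₁ i₀ v • α₁ i₀) = 0
      rw [map_smul, map_smul, h', smul_zero, smul_zero]
    have h1 := LinearMap.congr_fun (congrArg Prod.snd h0) (α₂ i₀)
    refine Prod.ext h ?_
    change Z.2 ((p i₀).2 (α₂ i₀)) = 0 at h1
    rwa [hpα₂] at h1
  · rintro _ ⟨Z, hZ, rfl⟩ h
    have h' : Z.2 (α₂ i₀) = 0 := h
    have h0 := hR.snd_inj _ (hR.mul_idem_mem hp hp₁ hp₂ hZ i₀) <| LinearMap.ext fun v => by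
      change Z.2 ((f₂ i₀ (α₂ i₀))⁻¹ • f₂ i₀ v • α₂ i₀) = 0
      rw [map_smul, map_smul, h', smul_zero, smul_zero]
    have h1 := LinearMap.congr_fun (congrArg Prod.fst h0) (α₁ i₀)
    refine Prod.ext ?_ h
    change Z.1 ((p i₀).1 (α₁ i₀)) = 0 at h1
    rwa [hpα₁] at h1
  · rw [Submodule.ne_bot_iff]
    refine ⟨L (p i₀), ⟨p i₀, hR.idem_mem_cornerSubmodule hp hp₁ hp₂ i₀, rfl⟩, fun h => ?_⟩
    have h1 : (p i₀).1 (α₁ i₀) = 0 := congrArg Prod.fst h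
    rw [hpα₁] at h1
    exact hn₁ i₀ (by rw [h1, map_zero])
end
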